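/- Let n ≥ 5 and 2 ≤ k ≤ n−2 be integers, and let Ŝ = { ρ ∈ D_n : ρ·Ĉ^ch_{k,n} = Ĉ^ch_{k,n} } be the stabilizer of the dual checkboard collection. Then: if k and n are both even, Ŝ is the cyclic subgroup generated by σ^{n/2}; if k is odd and n is even, Ŝ is the subgroup generated by σ^{n/2} and σ^k ρ₀, where ρ₀(x) = (k−1)(n−1)/2 − x; and if n is odd, Ŝ is the subgroup generated by σ^k ρ₀ (in the last two cases (k−1)(n−1) is even, so ρ₀ is well defined). -/

import Mathlib

open Finset

/-- `(a,b,c,d)` is strictly cyclically ordered in `ℤ/nℤ`. -/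
def StrictCyclicOrd {n : ℕ} (a b c d : ZMod n) : Prop :=
  0 < (b - a).val ∧ (b - a).val < (c - a).val ∧ (c - a).val < (d - a).val

/-- `I` and `J` are weakly separated subsets of `ℤ/nℤ`. -/
def WeaklySep {n : ℕ} (I J : Finset (ZMod n)) : Prop :=
  ¬ ∃ a c b d : ZMod n, a ∈ I \ J ∧ c ∈ I \ J ∧ b ∈ J \ I ∧ d ∈ J \ I ∧
      StrictCyclicOrd a b c d

/-- The dihedral group `D_n`, realized as the subgroup of permutations of `ℤ/nℤ`
generated by `σ : i ↦ i + 1` and `τ : i ↦ 2 - i`. -/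
def dihedral (n : ℕ) : Subgroup (Equiv.Perm (ZMod n)) :=
  Subgroup.closure {Equiv.addRight (1 : ZMod n), Equiv.subLeft (2 : ZMod n)}

/-- The set `[m] = {1, …, m} ⊆ ℤ/nℤ` (with `[0] = ∅`). -/
def seg (n m : ℕ) : Finset (ZMod n) := (Finset.Icc 1 m).image (fun t : ℕ => (t : ZMod n))

/-- Rectangle label `I^rec_{i,j} = ([i+j]∖[i]) ∪ ([n]∖[n−k+j])`. -/
def Irec (k n i j : ℕ) : Finset (ZMod n) :=
  (seg n (i + j) \ seg n i) ∪ (seg n n \ seg n (n - k + j))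

/-- Checkboard label `I^ch_{i,j} = σ^{−⌈(i+j)/2⌉} I^rec_{i,j}`. -/
def Ich (k n i j : ℕ) : Finset (ZMod n) :=
  (Irec k n i j).image (fun x => x - (((i + j + 1) / 2 : ℕ) : ZMod n))

/-- Dual rectangle label `Î^rec_{i,j} = [i] ∪ ([k+j]∖[i+j])`. -/
def Drec (k n i j : ℕ) : Finset (ZMod n) :=
  seg n i ∪ (seg n (k + j) \ seg n (i + j))

/-- Dual checkboard label `Î^ch_{i,j} = σ^{−⌈(i+j)/2⌉} Î^rec_{i,j}`. -/
def Dch (k n i j : ℕ) : Finset (ZMod n) :=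
  (Drec k n i j).image (fun x => x - (((i + j + 1) / 2 : ℕ) : ZMod n))

/-- The rectangle collection `C^rec_{k,n}`. -/
def Crec (k n : ℕ) : Finset (Finset (ZMod n)) :=
  ((Finset.range (n - k + 1)) ×ˢ (Finset.range (k + 1))).image (fun p => Irec k n p.1 p.2)

/-- The checkboard collection `C^ch_{k,n}`. -/
def Cch (k n : ℕ) : Finset (Finset (ZMod n)) :=
  ((Finset.range (n - k + 1)) ×ˢ (Finset.range (k + 1))).image (fun p => Ich k n p.1 p.2)

/-- The dual rectangle collection `Ĉ^rec_{k,n}`. -/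
def CDrec (k n : ℕ) : Finset (Finset (ZMod n)) :=
  ((Finset.range (k + 1)) ×ˢ (Finset.range (n - k + 1))).image (fun p => Drec k n p.1 p.2)

/-- The dual checkboard collection `Ĉ^ch_{k,n}`. -/
def CDch (k n : ℕ) : Finset (Finset (ZMod n)) :=
  ((Finset.range (k + 1)) ×ˢ (Finset.range (n - k + 1))).image (fun p => Dch k n p.1 p.2)

/-- `C` is a weakly separated collection of `k`-subsets of `ℤ/nℤ`. -/
def IsWSColl (n k : ℕ) (C : Set (Finset (ZMod n))) : Prop :=
  (∀ I ∈ C, I.card = k) ∧ ∀ I ∈ C, ∀ J ∈ C, WeaklySep I J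

/-- `C` is a maximal weakly separated collection of `k`-subsets of `ℤ/nℤ`. -/
def IsMaxWSColl (n k : ℕ) (C : Set (Finset (ZMod n))) : Prop :=
  IsWSColl n k C ∧ ∀ C' : Set (Finset (ZMod n)), IsWSColl n k C' → C ⊆ C' → C' = C

/-!
Each label of the collection is a union of two cyclic arcs of `ℤ/nℤ`. For `0 < i < k` and
`0 < j < n - k` these arcs are disjoint and not adjacent, so the sum of their two starting points
is an invariant of the label, and it equals `2` or `1` according to the parity of `i + j`.
A symmetry `x ↦ x + d` changes this sum by `2 d`; a symmetry `x ↦ c - x` replaces it by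
`2 c - k` plus `0` or `1`, again according to the parity of `i + j`. Comparing labels of both
parities, which exist since `n ≥ 5`, forces `2 d = 0` and `2 c = k + 1`. Conversely, all of these
maps are symmetries: they permute the labels by exchanging `i` with `k - i`, or `j` with
`n - k - j`, or both.
-/

section Arithmetic

variable {n k : ℕ}

lemma natCast_ne_zero_of_pos_of_lt {m : ℕ} (hm : 0 < m) (hmn : m < n) : (m : ZMod n) ≠ 0 := by
  rw [Ne, ZMod.natCast_eq_zero_iff]
  exact Nat.not_dvd_of_pos_of_lt hm hmn

lemma two_mul_val_eq_of_two_mul_eq [NeZero n] {x : ZMod n} {b : ℕ} (hb : b < n)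
    (hx : 2 * x = b) : 2 * x.val = b ∨ 2 * x.val = b + n := by
  have hval : x.val < n := x.val_lt
  have hmod : 2 * x.val % n = b := by
    rw [← Nat.mod_eq_of_lt hb, ← ZMod.natCast_eq_natCast_iff', Nat.cast_mul,
      ZMod.natCast_zmod_val, Nat.cast_two, hx]
  rcases lt_or_ge (2 * x.val) n with hlt | hge
  · exact Or.inl (by rwa [Nat.mod_eq_of_lt hlt] at hmod)
  · rw [Nat.mod_eq_sub_mod hge, Nat.mod_eq_of_lt (by omega)] at hmod
    omega

lemma eq_zero_of_two_mul_eq_zero_of_odd (hn : Odd n) {d : ZMod n} (hd : 2 * d = 0) : d = 0 := by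
  have htwo : IsUnit (2 : ZMod n) := (ZMod.isUnit_iff_coprime 2 n).2 hn.coprime_two_left
  exact htwo.mul_right_eq_zero.1 hd

lemma two_mul_ne_add_one_of_even (hn : Even n) (hk : Even k) (c : ZMod n) : 2 * c ≠ k + 1 := by
  intro hc
  have hmod := congrArg (ZMod.castHom hn.two_dvd (ZMod 2)) hc
  rw [map_mul, map_add, map_ofNat, map_natCast, map_one, ZMod.natCast_eq_zero_iff_even.2 hk,
    show (2 : ZMod 2) = 0 from rfl, zero_mul, zero_add] at hmod
  exact zero_ne_one hmod

lemma two_mul_reflection_center_eq (hn : 1 ≤ n) (hk : 1 ≤ k) (hodd : Odd k ∨ Odd n) :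
    2 * ((((k - 1) * (n - 1) / 2 : ℕ) : ZMod n) + k) = k + 1 := by
  have heven : Even ((k - 1) * (n - 1)) := by
    rcases hodd with hodd | hodd
    · exact (Nat.Odd.sub_odd hodd odd_one).mul_right _
    · exact (Nat.Odd.sub_odd hodd odd_one).mul_left _
  have hcast := congrArg (Nat.cast : ℕ → ZMod n) (Nat.two_mul_div_two_of_even heven)
  push_cast [hn, hk, ZMod.natCast_self] at hcast
  linear_combination hcast

lemma two_mul_one_sub_half_add (s : ℕ) :
    2 * (1 - ((s + 1) / 2 : ℕ) : ZMod n) + s = 2 - (s % 2 : ℕ) := by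
  have hhalf : 2 * ((s + 1) / 2) = s + s % 2 := by omega
  have hcast := congrArg (Nat.cast : ℕ → ZMod n) hhalf
  push_cast at hcast ⊢
  linear_combination -hcast

lemma eq_zero_of_forall_lt_two_exists_eq_sub (hn : 3 ≤ n) {x : ZMod n}
    (hx : ∀ r : ℕ, r < 2 → ∃ r' : ℕ, r' < 2 ∧ x = r - r') : x = 0 := by
  obtain ⟨p, hp, hxp⟩ := hx 0 (by omega)
  obtain ⟨q, hq, hxq⟩ := hx 1 (by omega)
  have htwo : ((2 : ℕ) : ZMod n) ≠ 0 := natCast_ne_zero_of_pos_of_lt (by omega) (by omega)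
  interval_cases p
  · simpa using hxp
  · interval_cases q
    · refine absurd ?_ htwo
      push_cast at hxp hxq ⊢
      linear_combination hxp - hxq
    · simpa using hxq

end Arithmetic

section Arcs

variable {n : ℕ}

/-- The cyclic arc `{a, a + 1, …, a + m - 1}` of `ℤ/nℤ`. -/
def arc (a : ZMod n) (m : ℕ) : Finset (ZMod n) := (range m).image fun t : ℕ => a + t

lemma mem_arc {a x : ZMod n} {m : ℕ} : x ∈ arc a m ↔ ∃ t < m, a + t = x := by
  simp [arc]

lemma image_addRight_arc (a d : ZMod n) (m : ℕ) :
    (arc a m).image (Equiv.addRight d) = arc (a + d) m := by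
  rw [arc, image_image]
  exact image_congr fun t _ => add_right_comm a (t : ZMod n) d

lemma image_subLeft_arc (a c : ZMod n) (m : ℕ) :
    (arc a m).image (Equiv.subLeft c) = arc (c + 1 - a - m : ZMod n) m := by
  rw [arc, arc, image_image]
  conv_rhs => rw [← range_image_pred_top_sub m, image_image]
  refine image_congr fun t ht => ?_
  have htm : t + 1 ≤ m := by simpa using ht
  have hcast : ((m - 1 - t : ℕ) : ZMod n) = m - 1 - t := by
    rw [Nat.sub_sub, add_comm, Nat.cast_sub htm]
    push_cast
    ring
  simp only [Function.comp_apply, Equiv.subLeft_apply, hcast]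
  ring

lemma seg_eq_arc (m : ℕ) : seg n m = arc 1 m := by
  ext x
  simp only [seg, mem_image, mem_Icc, mem_arc]
  constructor
  · rintro ⟨t, ht, rfl⟩
    exact ⟨t - 1, by omega, by rw [Nat.cast_sub ht.1]; push_cast; ring⟩
  · rintro ⟨t, ht, rfl⟩
    exact ⟨t + 1, by omega, by push_cast; ring⟩

lemma arc_union_arc (a : ZMod n) (m l : ℕ) : arc a m ∪ arc (a + m) l = arc a (m + l) := by
  ext x
  simp only [mem_union, mem_arc]
  constructor
  · rintro (⟨t, ht, rfl⟩ | ⟨t, ht, rfl⟩)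
    · exact ⟨t, by omega, rfl⟩
    · exact ⟨m + t, by omega, by push_cast; ring⟩
  · rintro ⟨t, ht, rfl⟩
    by_cases htm : t < m
    · exact Or.inl ⟨t, htm, rfl⟩
    · exact Or.inr ⟨t - m, by omega, by rw [Nat.cast_sub (by omega)]; ring⟩

lemma disjoint_arc_arc (a : ZMod n) {m l : ℕ} (hml : m + l ≤ n) :
    Disjoint (arc a m) (arc (a + m) l) := by
  simp only [disjoint_left, mem_arc]
  rintro x ⟨t, ht, rfl⟩ ⟨u, hu, hx⟩
  refine natCast_ne_zero_of_pos_of_lt (n := n) (m := m + u - t) (by omega) (by omega) ?_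
  rw [Nat.cast_sub (by omega)]
  push_cast
  linear_combination hx

lemma arc_sdiff_arc (a : ZMod n) {m l : ℕ} (hml : m + l ≤ n) :
    arc a (m + l) \ arc a m = arc (a + m : ZMod n) l := by
  rw [← arc_union_arc, union_sdiff_cancel_left (disjoint_arc_arc a hml)]

/-- The points of `I` at which a maximal cyclic arc contained in `I` begins. -/
def starts (I : Finset (ZMod n)) : Finset (ZMod n) := {x ∈ I | x - 1 ∉ I}

lemma starts_union_subset (I J : Finset (ZMod n)) : starts (I ∪ J) ⊆ starts I ∪ starts J := by
  intro x
  simp only [starts, mem_filter, mem_union]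
  tauto

lemma starts_arc_subset (a : ZMod n) (m : ℕ) : starts (arc a m) ⊆ {a} := by
  intro x hx
  obtain ⟨hmem, hpred⟩ := mem_filter.1 hx
  obtain ⟨t, ht, rfl⟩ := mem_arc.1 hmem
  cases t with
  | zero => simp
  | succ t => exact absurd (mem_arc.2 ⟨t, by omega, by push_cast; ring⟩) hpred

/-- The union of two cyclic arcs of lengths `i` and `l`: the first one begins at `a`, and there is
a gap of length `j` between its end and the beginning of the second one. -/
def twoArcs (a : ZMod n) (i j l : ℕ) : Finset (ZMod n) := arc a i ∪ arc (a + i + j) l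

lemma image_addRight_twoArcs (a d : ZMod n) (i j l : ℕ) :
    (twoArcs a i j l).image (Equiv.addRight d) = twoArcs (a + d) i j l := by
  rw [twoArcs, twoArcs, image_union, image_addRight_arc, image_addRight_arc]
  congr 2
  ring

lemma image_subLeft_twoArcs (a c : ZMod n) (i j l : ℕ) :
    (twoArcs a i j l).image (Equiv.subLeft c) =
      twoArcs (c + 1 - a - i - j - l : ZMod n) l j i := by
  rw [twoArcs, twoArcs, image_union, image_subLeft_arc, image_subLeft_arc, union_comm]
  congr 2 <;> ring

lemma twoArcs_swap (a : ZMod n) {i j l m : ℕ} (hn : i + j + l + m = n) :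
    twoArcs a i j l = twoArcs (a + i + j : ZMod n) l m i := by
  have hturn : a + i + j + l + m = a := by
    have hcast : ((i + j + l + m : ℕ) : ZMod n) = 0 := by rw [hn, ZMod.natCast_self]
    push_cast at hcast
    linear_combination hcast
  rw [twoArcs, twoArcs, hturn, union_comm]

lemma left_mem_starts_twoArcs (a : ZMod n) {i j l m : ℕ} (hi : 0 < i) (hm : 0 < m)
    (hn : i + j + l + m = n) : a ∈ starts (twoArcs a i j l) := by
  simp only [starts, twoArcs, mem_filter, mem_union, mem_arc]
  refine ⟨Or.inl ⟨0, hi, by simp⟩, ?_⟩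
  rintro (⟨t, ht, hx⟩ | ⟨t, ht, hx⟩)
  · refine natCast_ne_zero_of_pos_of_lt (n := n) (m := t + 1) (by omega) (by omega) ?_
    push_cast
    linear_combination hx
  · refine natCast_ne_zero_of_pos_of_lt (n := n) (m := i + j + t + 1) (by omega) (by omega) ?_
    push_cast
    linear_combination hx

lemma starts_twoArcs_subset (a : ZMod n) (i j l : ℕ) :
    starts (twoArcs a i j l) ⊆ {a, a + i + j} :=
  (starts_union_subset _ _).trans
    (union_subset_union (starts_arc_subset _ _) (starts_arc_subset _ _))

lemma starts_twoArcs (a : ZMod n) {i j l m : ℕ} (hi : 0 < i) (hj : 0 < j) (hl : 0 < l)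
    (hm : 0 < m) (hn : i + j + l + m = n) :
    starts (twoArcs a i j l) = {a, a + i + j} := by
  refine (starts_twoArcs_subset a i j l).antisymm ?_
  rw [insert_subset_iff, singleton_subset_iff]
  refine ⟨left_mem_starts_twoArcs a hi hm hn, ?_⟩
  rw [twoArcs_swap a hn]
  exact left_mem_starts_twoArcs _ hl hj (m := j) (by omega)

lemma sum_starts_eq_of_twoArcs_eq {a a' : ZMod n} {i j l m i' j' l' : ℕ} (hi : 0 < i) (hj : 0 < j)
    (hl : 0 < l) (hm : 0 < m) (hn : i + j + l + m = n)
    (heq : twoArcs a i j l = twoArcs a' i' j' l') :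
    2 * a + i + j = 2 * a' + i' + j' := by
  have hne : a ≠ a + i + j := by
    intro h
    refine natCast_ne_zero_of_pos_of_lt (n := n) (m := i + j) (by omega) (by omega) ?_
    push_cast
    linear_combination -h
  have hsub : ({a, a + i + j} : Finset (ZMod n)) ⊆ {a', a' + i' + j'} := by
    rw [← starts_twoArcs a hi hj hl hm hn, heq]
    exact starts_twoArcs_subset a' i' j' l'
  simp only [insert_subset_iff, singleton_subset_iff, mem_insert, mem_singleton] at hsub
  rcases hsub with ⟨ha | ha, hb | hb⟩
  · exact absurd (ha.trans hb.symm) hne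
  · linear_combination ha + hb
  · linear_combination ha + hb
  · exact absurd (ha.trans hb.symm) hne

end Arcs

section Labels

variable {n : ℕ}

/-- The dual checkboard label `Î^ch_{i,j}` for `k = i + l`, as a union of two arcs. Taking `l`
instead of `k` as a parameter avoids truncated subtraction. -/
def checkboardArcs (n i j l : ℕ) : Finset (ZMod n) :=
  twoArcs (1 - ((i + j + 1) / 2 : ℕ) : ZMod n) i j l

lemma Dch_eq_checkboardArcs {i j l : ℕ} (hn : i + l + j ≤ n) :
    Dch (i + l) n i j = checkboardArcs n i j l := by
  have hDrec : Drec (i + l) n i j = twoArcs 1 i j l := by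
    rw [Drec, seg_eq_arc, seg_eq_arc, seg_eq_arc, add_right_comm,
      arc_sdiff_arc _ (by omega), twoArcs, Nat.cast_add, add_assoc]
  rw [Dch, hDrec, checkboardArcs, sub_eq_add_neg, ← image_addRight_twoArcs]
  simp only [sub_eq_add_neg, Equiv.coe_addRight]

lemma mem_CDch_iff {k : ℕ} (hkn : k ≤ n) {I : Finset (ZMod n)} :
    I ∈ CDch k n ↔ ∃ i j l m, i + l = k ∧ i + j + l + m = n ∧ checkboardArcs n i j l = I := by
  simp only [CDch, mem_image, mem_product, mem_range, Prod.exists]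
  constructor
  · rintro ⟨i, j, ⟨hi, hj⟩, rfl⟩
    obtain ⟨l, rfl⟩ := Nat.exists_eq_add_of_le (Nat.lt_succ_iff.1 hi)
    exact ⟨i, j, l, n - (i + l) - j, rfl, by omega, (Dch_eq_checkboardArcs (by omega)).symm⟩
  · rintro ⟨i, j, l, m, rfl, hn, rfl⟩
    exact ⟨i, j, ⟨by omega, by omega⟩, Dch_eq_checkboardArcs (by omega)⟩

lemma image_addRight_checkboardArcs {i j l m d : ℕ} (hn : i + j + l + m = n) (hd : 2 * d = n) :
    (checkboardArcs n i j l).image (Equiv.addRight (d : ZMod n)) = checkboardArcs n l m i := by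
  rw [checkboardArcs, checkboardArcs, image_addRight_twoArcs, twoArcs_swap _ hn]
  congr 1
  have hstart : d + i + j + (l + m + 1) / 2 = n + (i + j + 1) / 2 := by omega
  have hcast := congrArg (Nat.cast : ℕ → ZMod n) hstart
  push_cast [ZMod.natCast_self] at hcast ⊢
  linear_combination hcast

lemma image_subLeft_checkboardArcs_of_two_mul_eq {i j l c : ℕ} (hc : 2 * c = i + l + 1) :
    (checkboardArcs n i j l).image (Equiv.subLeft (c : ZMod n)) = checkboardArcs n l j i := by
  rw [checkboardArcs, checkboardArcs, image_subLeft_twoArcs]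
  congr 1
  have hstart : c + 1 + (i + j + 1) / 2 + (l + j + 1) / 2 = i + j + l + 2 := by omega
  have hcast := congrArg (Nat.cast : ℕ → ZMod n) hstart
  push_cast at hcast ⊢
  linear_combination hcast

lemma image_subLeft_checkboardArcs_of_two_mul_eq_add_self {i j l m c : ℕ} (hn : i + j + l + m = n)
    (hc : 2 * c = i + l + 1 + n) :
    (checkboardArcs n i j l).image (Equiv.subLeft (c : ZMod n)) = checkboardArcs n i m l := by
  rw [checkboardArcs, checkboardArcs, image_subLeft_twoArcs,
    twoArcs_swap _ (m := m) (by omega)]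
  congr 1
  have hstart : c + 1 + (i + j + 1) / 2 + (i + m + 1) / 2 = n + i + 2 := by omega
  have hcast := congrArg (Nat.cast : ℕ → ZMod n) hstart
  push_cast [ZMod.natCast_self] at hcast ⊢
  linear_combination hcast

lemma two_mul_eq_of_image_addRight {i j l m i' j' l' : ℕ} {d : ZMod n} (hi : 0 < i) (hj : 0 < j)
    (hl : 0 < l) (hm : 0 < m) (hn : i + j + l + m = n)
    (heq : (checkboardArcs n i j l).image (Equiv.addRight d) = checkboardArcs n i' j' l') :
    2 * d = ((i + j) % 2 : ℕ) - ((i' + j') % 2 : ℕ) := by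
  rw [checkboardArcs, checkboardArcs, image_addRight_twoArcs] at heq
  have hsum := sum_starts_eq_of_twoArcs_eq hi hj hl hm hn heq
  have hs := two_mul_one_sub_half_add (n := n) (i + j)
  have hs' := two_mul_one_sub_half_add (n := n) (i' + j')
  rw [Nat.cast_add] at hs hs'
  linear_combination hsum - hs + hs'

lemma two_mul_eq_of_image_subLeft {i j l m i' j' l' : ℕ} {c : ZMod n} (hi : 0 < i) (hj : 0 < j)
    (hl : 0 < l) (hm : 0 < m) (hn : i + j + l + m = n)
    (heq : (checkboardArcs n i j l).image (Equiv.subLeft c) = checkboardArcs n i' j' l') :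
    2 * c = (i + l : ℕ) + 2 - ((i + j) % 2 : ℕ) - ((i' + j') % 2 : ℕ) := by
  rw [checkboardArcs, checkboardArcs, image_subLeft_twoArcs] at heq
  have hsum := sum_starts_eq_of_twoArcs_eq hl hj hi hm (by omega) heq
  have hs := two_mul_one_sub_half_add (n := n) (i + j)
  have hs' := two_mul_one_sub_half_add (n := n) (i' + j')
  rw [Nat.cast_add] at hs hs' ⊢
  linear_combination hsum + hs + hs'

lemma exists_interior_label_of_parity {k r : ℕ} (hn : 5 ≤ n) (hk : 2 ≤ k) (hkn : k + 2 ≤ n)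
    (hr : r < 2) :
    ∃ i j l m, 0 < i ∧ 0 < j ∧ 0 < l ∧ 0 < m ∧ i + l = k ∧ i + j + l + m = n ∧
      (i + j) % 2 = r := by
  obtain rfl | rfl : r = 0 ∨ r = 1 := by omega
  · exact ⟨1, 1, k - 1, n - k - 1, by omega⟩
  · rcases hk.eq_or_lt with rfl | hk
    · exact ⟨1, 2, 1, n - 4, by omega⟩
    · exact ⟨2, 1, k - 2, n - k - 1, by omega⟩

end Labels

section Dihedral

variable {n : ℕ}

lemma addRight_one_pow (m : ℕ) :
    (Equiv.addRight (1 : ZMod n)) ^ m = Equiv.addRight (m : ZMod n) := by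
  simp

lemma addRight_mul_subLeft (d c : ZMod n) :
    Equiv.addRight d * Equiv.subLeft c = Equiv.subLeft (c + d) := by
  ext x
  simp only [Equiv.Perm.mul_apply, Equiv.subLeft_apply, Equiv.coe_addRight]
  ring

lemma subLeft_mul_addRight (c d : ZMod n) :
    Equiv.subLeft c * Equiv.addRight d = Equiv.subLeft (c - d) := by
  ext x
  simp only [Equiv.Perm.mul_apply, Equiv.subLeft_apply, Equiv.coe_addRight]
  ring

lemma subLeft_mul_subLeft (c c' : ZMod n) :
    Equiv.subLeft c * Equiv.subLeft c' = Equiv.addRight (c - c') := by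
  ext x
  simp only [Equiv.Perm.mul_apply, Equiv.subLeft_apply, Equiv.coe_addRight]
  ring

lemma addRight_mem_dihedral (d : ZMod n) : Equiv.addRight d ∈ dihedral n := by
  obtain ⟨z, rfl⟩ := ZMod.intCast_surjective d
  have hpow : Equiv.addRight (z : ZMod n) = Equiv.addRight (1 : ZMod n) ^ z := by simp
  rw [hpow]
  exact zpow_mem (Subgroup.subset_closure (by simp)) z

lemma subLeft_mem_dihedral (c : ZMod n) : Equiv.subLeft c ∈ dihedral n := by
  rw [← add_sub_cancel 2 c, ← addRight_mul_subLeft]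
  exact mul_mem (addRight_mem_dihedral _) (Subgroup.subset_closure (by simp))

lemma eq_addRight_or_eq_subLeft_of_mem_dihedral {ρ : Equiv.Perm (ZMod n)} (hρ : ρ ∈ dihedral n) :
    (∃ d, ρ = Equiv.addRight d) ∨ ∃ c, ρ = Equiv.subLeft c := by
  induction hρ using Subgroup.closure_induction with
  | mem ρ hρ =>
    rcases hρ with rfl | rfl
    · exact Or.inl ⟨_, rfl⟩
    · exact Or.inr ⟨_, rfl⟩
  | one => exact Or.inl ⟨0, Equiv.addRight_zero.symm⟩
  | mul ρ ρ' _ _ hρ hρ' =>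
    rcases hρ with ⟨d, rfl⟩ | ⟨c, rfl⟩ <;> rcases hρ' with ⟨d', rfl⟩ | ⟨c', rfl⟩
    · exact Or.inl ⟨d' + d, (Equiv.addRight_add d' d).symm⟩
    · exact Or.inr ⟨c' + d, addRight_mul_subLeft d c'⟩
    · exact Or.inr ⟨c - d', subLeft_mul_addRight c d'⟩
    · exact Or.inl ⟨c - c', subLeft_mul_subLeft c c'⟩
  | inv ρ _ hρ =>
    rcases hρ with ⟨d, rfl⟩ | ⟨c, rfl⟩
    · exact Or.inl ⟨-d, Equiv.neg_addRight d⟩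
    · exact Or.inr ⟨c, by rw [inv_eq_iff_mul_eq_one, subLeft_mul_subLeft, sub_self,
        Equiv.addRight_zero]⟩

end Dihedral

section Stabilizer

open scoped Pointwise

variable {n k : ℕ}

/-- The stabilizer `Ŝ` of the dual checkboard collection in the dihedral group. Permutations act
on collections of subsets through the pointwise actions on `Finset`s, applied twice. -/
def dualCheckboardStabilizer (k n : ℕ) : Subgroup (Equiv.Perm (ZMod n)) :=
  dihedral n ⊓ MulAction.stabilizer (Equiv.Perm (ZMod n)) (CDch k n)

lemma coe_dualCheckboardStabilizer (k n : ℕ) :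
    (dualCheckboardStabilizer k n : Set (Equiv.Perm (ZMod n))) =
      {ρ | ρ ∈ dihedral n ∧ (CDch k n).image (fun I => I.image ρ) = CDch k n} :=
  rfl

lemma mem_dualCheckboardStabilizer_iff (hkn : k ≤ n) {ρ : Equiv.Perm (ZMod n)} :
    ρ ∈ dualCheckboardStabilizer k n ↔ ρ ∈ dihedral n ∧ ∀ i j l m, i + l = k → i + j + l + m = n →
      ∃ i' j' l' m', i' + l' = k ∧ i' + j' + l' + m' = n ∧
        (checkboardArcs n i j l).image ρ = checkboardArcs n i' j' l' := by
  rw [dualCheckboardStabilizer, Subgroup.mem_inf, MulAction.mem_stabilizer_finset']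
  refine and_congr_right fun _ => ⟨fun h i j l m hk hn => ?_, fun h I hI => ?_⟩
  · obtain ⟨i', j', l', m', hk', hn', heq⟩ :=
      (mem_CDch_iff hkn).1 (h ((mem_CDch_iff hkn).2 ⟨i, j, l, m, hk, hn, rfl⟩))
    exact ⟨i', j', l', m', hk', hn', heq.symm⟩
  · obtain ⟨i, j, l, m, hk, hn, rfl⟩ := (mem_CDch_iff hkn).1 hI
    obtain ⟨i', j', l', m', hk', hn', heq⟩ := h i j l m hk hn
    exact (mem_CDch_iff hkn).2 ⟨i', j', l', m', hk', hn', heq.symm⟩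

lemma addRight_half_mem_dualCheckboardStabilizer (hkn : k ≤ n) (hn : Even n) :
    Equiv.addRight ((n / 2 : ℕ) : ZMod n) ∈ dualCheckboardStabilizer k n := by
  refine (mem_dualCheckboardStabilizer_iff hkn).2 ⟨addRight_mem_dihedral _, ?_⟩
  exact fun i j l m hk hsum => ⟨l, m, i, j, by omega, by omega,
    image_addRight_checkboardArcs hsum (Nat.two_mul_div_two_of_even hn)⟩

lemma subLeft_mem_dualCheckboardStabilizer (hkn : k + 1 < n) {c : ZMod n} (hc : 2 * c = k + 1) :
    Equiv.subLeft c ∈ dualCheckboardStabilizer k n := by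
  have : NeZero n := ⟨by omega⟩
  have hval := two_mul_val_eq_of_two_mul_eq hkn (by push_cast; exact hc)
  rw [← ZMod.natCast_zmod_val c, mem_dualCheckboardStabilizer_iff (by omega)]
  refine ⟨subLeft_mem_dihedral _, fun i j l m hk hn => ?_⟩
  rcases hval with hval | hval
  · exact ⟨l, j, i, m, by omega, by omega, image_subLeft_checkboardArcs_of_two_mul_eq (by omega)⟩
  · exact ⟨i, m, l, j, hk, by omega,
      image_subLeft_checkboardArcs_of_two_mul_eq_add_self hn (by omega)⟩

lemma two_mul_eq_zero_of_addRight_mem (hn : 5 ≤ n) (hk : 2 ≤ k) (hkn : k + 2 ≤ n) {d : ZMod n}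
    (hd : Equiv.addRight d ∈ dualCheckboardStabilizer k n) : 2 * d = 0 := by
  refine eq_zero_of_forall_lt_two_exists_eq_sub (by omega) fun r hr => ?_
  obtain ⟨i, j, l, m, hi, hj, hl, hm, hik, hsum, rfl⟩ :=
    exists_interior_label_of_parity hn hk hkn hr
  obtain ⟨i', j', l', m', -, -, heq⟩ :=
    ((mem_dualCheckboardStabilizer_iff (by omega)).1 hd).2 i j l m hik hsum
  exact ⟨(i' + j') % 2, Nat.mod_lt _ two_pos, two_mul_eq_of_image_addRight hi hj hl hm hsum heq⟩

lemma two_mul_eq_of_subLeft_mem (hn : 5 ≤ n) (hk : 2 ≤ k) (hkn : k + 2 ≤ n) {c : ZMod n}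
    (hc : Equiv.subLeft c ∈ dualCheckboardStabilizer k n) : 2 * c = k + 1 := by
  refine sub_eq_zero.1 (eq_zero_of_forall_lt_two_exists_eq_sub (by omega) fun r hr => ?_)
  obtain ⟨i, j, l, m, hi, hj, hl, hm, rfl, hsum, hpar⟩ :=
    exists_interior_label_of_parity hn hk hkn (show 1 - r < 2 by omega)
  obtain ⟨i', j', l', m', -, -, heq⟩ :=
    ((mem_dualCheckboardStabilizer_iff (by omega)).1 hc).2 i j l m rfl hsum
  refine ⟨(i' + j') % 2, Nat.mod_lt _ two_pos, ?_⟩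
  have htwo := two_mul_eq_of_image_subLeft hi hj hl hm hsum heq
  rw [hpar, Nat.cast_sub (by omega), Nat.cast_one] at htwo
  linear_combination htwo

lemma dualCheckboardStabilizer_le (hn : 5 ≤ n) (hk : 2 ≤ k) (hkn : k + 2 ≤ n)
    {H : Subgroup (Equiv.Perm (ZMod n))} (hrot : ∀ d : ZMod n, 2 * d = 0 → Equiv.addRight d ∈ H)
    (hrefl : ∀ c : ZMod n, 2 * c = k + 1 → Equiv.subLeft c ∈ H) :
    dualCheckboardStabilizer k n ≤ H := by
  intro ρ hρ
  rcases eq_addRight_or_eq_subLeft_of_mem_dihedral hρ.1 with ⟨d, rfl⟩ | ⟨c, rfl⟩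
  · exact hrot d (two_mul_eq_zero_of_addRight_mem hn hk hkn hρ)
  · exact hrefl c (two_mul_eq_of_subLeft_mem hn hk hkn hρ)

lemma addRight_mem_of_addRight_half_mem [NeZero n] {H : Subgroup (Equiv.Perm (ZMod n))}
    (hhalf : Equiv.addRight ((n / 2 : ℕ) : ZMod n) ∈ H) {d : ZMod n} (hd : 2 * d = 0) :
    Equiv.addRight d ∈ H := by
  rw [← ZMod.natCast_zmod_val d]
  rcases two_mul_val_eq_of_two_mul_eq (Nat.pos_of_neZero n) (by simpa using hd) with hval | hval
  · rw [show d.val = 0 by omega, Nat.cast_zero, Equiv.addRight_zero]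
    exact one_mem H
  · rwa [show d.val = n / 2 by omega]

lemma subLeft_mem_of_subLeft_mem {H : Subgroup (Equiv.Perm (ZMod n))}
    (hrot : ∀ d : ZMod n, 2 * d = 0 → Equiv.addRight d ∈ H) {c c' : ZMod n}
    (hmem : Equiv.subLeft c ∈ H) (hcc' : 2 * c' = 2 * c) : Equiv.subLeft c' ∈ H := by
  rw [← add_sub_cancel c c', ← addRight_mul_subLeft]
  exact mul_mem (hrot _ (by linear_combination hcc')) hmem

theorem dualCheckboardStabilizer_eq_closure_of_even (hn : 5 ≤ n) (hk : 2 ≤ k) (hkn : k + 2 ≤ n)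
    (hn_even : Even n) (hk_even : Even k) :
    dualCheckboardStabilizer k n =
      Subgroup.closure {Equiv.addRight ((n / 2 : ℕ) : ZMod n)} := by
  have : NeZero n := ⟨by omega⟩
  refine le_antisymm (dualCheckboardStabilizer_le hn hk hkn
    (fun _ => addRight_mem_of_addRight_half_mem (Subgroup.subset_closure (Set.mem_singleton _)))
    fun c hc => absurd hc (two_mul_ne_add_one_of_even hn_even hk_even c)) ?_
  rw [Subgroup.closure_le, Set.singleton_subset_iff]
  exact addRight_half_mem_dualCheckboardStabilizer (by omega) hn_even

theorem dualCheckboardStabilizer_eq_closure_pair (hn : 5 ≤ n) (hk : 2 ≤ k) (hkn : k + 2 ≤ n)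
    (hn_even : Even n) {c : ZMod n} (hc : 2 * c = k + 1) :
    dualCheckboardStabilizer k n =
      Subgroup.closure {Equiv.addRight ((n / 2 : ℕ) : ZMod n), Equiv.subLeft c} := by
  have : NeZero n := ⟨by omega⟩
  have hrot (d : ZMod n) (hd : 2 * d = 0) : Equiv.addRight d ∈
      Subgroup.closure {Equiv.addRight ((n / 2 : ℕ) : ZMod n), Equiv.subLeft c} :=
    addRight_mem_of_addRight_half_mem (Subgroup.subset_closure (Or.inl rfl)) hd
  refine le_antisymm (dualCheckboardStabilizer_le hn hk hkn hrot fun c' hc' =>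
    subLeft_mem_of_subLeft_mem hrot (Subgroup.subset_closure (Or.inr rfl))
      (hc'.trans hc.symm)) ?_
  rw [Subgroup.closure_le, Set.pair_subset_iff]
  exact ⟨addRight_half_mem_dualCheckboardStabilizer (by omega) hn_even,
    subLeft_mem_dualCheckboardStabilizer (by omega) hc⟩

theorem dualCheckboardStabilizer_eq_closure_of_odd (hn : 5 ≤ n) (hk : 2 ≤ k) (hkn : k + 2 ≤ n)
    (hn_odd : Odd n) {c : ZMod n} (hc : 2 * c = k + 1) :
    dualCheckboardStabilizer k n = Subgroup.closure {Equiv.subLeft c} := by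
  have hrot (d : ZMod n) (hd : 2 * d = 0) :
      Equiv.addRight d ∈ Subgroup.closure {Equiv.subLeft c} := by
    rw [eq_zero_of_two_mul_eq_zero_of_odd hn_odd hd, Equiv.addRight_zero]
    exact one_mem _
  refine le_antisymm (dualCheckboardStabilizer_le hn hk hkn hrot fun c' hc' =>
    subLeft_mem_of_subLeft_mem hrot (Subgroup.subset_closure rfl) (hc'.trans hc.symm)) ?_
  rw [Subgroup.closure_le, Set.singleton_subset_iff]
  exact subLeft_mem_dualCheckboardStabilizer (by omega) hc

end Stabilizer

/-- the stabilizer of the dual checkboard collection in `D_n`. -/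
theorem dual_checkboard_stabilizer
    (n k : ℕ) (hn : 5 ≤ n) (hk : 2 ≤ k) (hkn : k ≤ n - 2) :
    (k % 2 = 0 → n % 2 = 0 →
      {ρ : Equiv.Perm (ZMod n) | ρ ∈ dihedral n ∧ (CDch k n).image (fun I => I.image ρ) = CDch k n}
        = ↑(Subgroup.closure {(Equiv.addRight (1 : ZMod n)) ^ (n / 2)})) ∧
    (k % 2 = 1 → n % 2 = 0 →
      {ρ : Equiv.Perm (ZMod n) | ρ ∈ dihedral n ∧ (CDch k n).image (fun I => I.image ρ) = CDch k n}
        = ↑(Subgroup.closure {(Equiv.addRight (1 : ZMod n)) ^ (n / 2),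
            (Equiv.addRight (1 : ZMod n)) ^ k * Equiv.subLeft ((((k - 1) * (n - 1)) / 2 : ℕ) : ZMod n)})) ∧
    (n % 2 = 1 →
      {ρ : Equiv.Perm (ZMod n) | ρ ∈ dihedral n ∧ (CDch k n).image (fun I => I.image ρ) = CDch k n}
        = ↑(Subgroup.closure
            {(Equiv.addRight (1 : ZMod n)) ^ k * Equiv.subLeft ((((k - 1) * (n - 1)) / 2 : ℕ) : ZMod n)})) := by
  have hkn' : k + 2 ≤ n := by omega
  have hcenter := two_mul_reflection_center_eq (n := n) (k := k) (by omega) (by omega)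
  rw [← coe_dualCheckboardStabilizer]
  simp only [addRight_one_pow, addRight_mul_subLeft, SetLike.coe_set_eq, ← Nat.even_iff,
    ← Nat.odd_iff]
  refine ⟨fun hk_even hn_even => ?_, fun hk_odd hn_even => ?_, fun hn_odd => ?_⟩
  · exact dualCheckboardStabilizer_eq_closure_of_even hn hk hkn' hn_even hk_even
  · exact dualCheckboardStabilizer_eq_closure_pair hn hk hkn' hn_even (hcenter (Or.inl hk_odd))
  · exact dualCheckboardStabilizer_eq_closure_of_odd hn hk hkn' hn_odd (hcenter (Or.inr hn_odd))
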